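/- Characterization of defeasible provability: for every propositional defeasible theory T and literal q, T ⊢ +∂q if and only if M_∂(q)=True for every defeasible model M of T. -/

import Mathlib

/-- A literal is an atom or its negation. -/
inductive Lit (Atom : Type) where
  | pos : Atom → Lit Atom
  | neg : Atom → Lit Atom
  deriving DecidableEq

/-- The complement `~q` of a literal `q`. -/
def Lit.compl {Atom : Type} : Lit Atom → Lit Atom
  | .pos a => .neg a
  | .neg a => .pos a

/-- The three kinds of rules: strict, defeasible, defeater. -/
inductive RuleKind where
  | strict
  | defeasible
  | defeater
  deriving DecidableEq

/-- A rule: a kind, a finite set of literals as body (antecedent), and a head literal. -/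
structure DRule (Atom : Type) where
  kind : RuleKind
  body : Finset (Lit Atom)
  head : Lit Atom
  deriving DecidableEq

/-- A rule is strict-or-defeasible (a "supportive" rule). -/
def DRule.isSd {Atom : Type} (r : DRule Atom) : Prop :=
  r.kind = RuleKind.strict ∨ r.kind = RuleKind.defeasible

/-- A propositional defeasible theory: finite set of facts, finite set of rules,
and a superiority relation on rules. -/
structure DTheory (Atom : Type) where
  facts : Finset (Lit Atom)
  rules : Finset (DRule Atom)
  sup : DRule Atom → DRule Atom → Prop

/-- Acyclicity of the superiority relation. -/
def SupAcyclic {Atom : Type} (T : DTheory Atom) : Prop :=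
  ∀ r : DRule Atom, ¬ Relation.TransGen T.sup r r

/-- Conclusions: tagged literals +Δq, -Δq, +∂q, -∂q. -/
inductive Concl (Atom : Type) where
  | plusDelta : Lit Atom → Concl Atom
  | minusDelta : Lit Atom → Concl Atom
  | plusPartial : Lit Atom → Concl Atom
  | minusPartial : Lit Atom → Concl Atom
  deriving DecidableEq

/-- The inference rules of DL: `Licensed T prev c` holds when the conclusion `c`
may be appended to a derivation whose preceding part is `prev`. -/
def Licensed {Atom : Type} (T : DTheory Atom)
    (prev : List (Concl Atom)) : Concl Atom → Prop
  | .plusDelta q =>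
      q ∈ T.facts ∨
      ∃ r ∈ T.rules, r.kind = RuleKind.strict ∧ r.head = q ∧
        ∀ a ∈ r.body, Concl.plusDelta a ∈ prev
  | .minusDelta q =>
      q ∉ T.facts ∧
      ∀ r ∈ T.rules, r.kind = RuleKind.strict → r.head = q →
        ∃ a ∈ r.body, Concl.minusDelta a ∈ prev
  | .plusPartial q =>
      (Concl.plusDelta q ∈ prev) ∨
      ((∃ r ∈ T.rules, r.isSd ∧ r.head = q ∧
          ∀ a ∈ r.body, Concl.plusPartial a ∈ prev) ∧
       (Concl.minusDelta q.compl ∈ prev) ∧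
       ∀ s ∈ T.rules, s.head = q.compl →
         ((∃ a ∈ s.body, Concl.minusPartial a ∈ prev) ∨
          (∃ t ∈ T.rules, t.isSd ∧ t.head = q ∧ T.sup t s ∧
            ∀ a ∈ t.body, Concl.plusPartial a ∈ prev)))
  | .minusPartial q =>
      (Concl.minusDelta q ∈ prev) ∧
      ((∀ r ∈ T.rules, r.isSd → r.head = q →
          ∃ a ∈ r.body, Concl.minusPartial a ∈ prev) ∨
       (Concl.plusDelta q.compl ∈ prev) ∨
       (∃ s ∈ T.rules, s.head = q.compl ∧
          (∀ a ∈ s.body, Concl.plusPartial a ∈ prev) ∧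
          ∀ t ∈ T.rules, t.isSd → t.head = q →
            ((∃ a ∈ t.body, Concl.minusPartial a ∈ prev) ∨ ¬ T.sup t s)))

/-- A derivation: each element of the sequence is licensed given the preceding part. -/
def DLDerivation {Atom : Type} (T : DTheory Atom)
    (P : List (Concl Atom)) : Prop :=
  ∀ i : Fin P.length, Licensed T (P.take i) (P.get i)

/-- `T ⊢ c`: some derivation in `T` ends with conclusion `c`. -/
def DLProves {Atom : Type} (T : DTheory Atom) (c : Concl Atom) : Prop :=
  ∃ P : List (Concl Atom), DLDerivation T P ∧ P.getLast? = some c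

/-- A defeasible interpretation: two partial functions from literals to booleans
(modelled as `Option Bool`-valued functions), `del` for definite knowledge (Δ) and
`par` for defeasible belief (∂). -/
structure DInterp (Atom : Type) where
  del : Lit Atom → Option Bool
  par : Lit Atom → Option Bool

/-- The coherence conditions on defeasible interpretations: what is known is believed,
and what is not believed is not known. -/
def DInterp.Coherent {Atom : Type} (I : DInterp Atom) : Prop :=
  (∀ q : Lit Atom, I.del q = some true → I.par q = some true) ∧
  (∀ q : Lit Atom, I.par q = some false → I.del q = some false)

open Classical in
/-- Kleene conjunction of a partial boolean function over a finite set of literals: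
`False` if some member maps to `False`, `True` if every member maps to `True`,
undefined otherwise. -/
noncomputable def kleeneAll {Atom : Type} (f : Lit Atom → Option Bool)
    (S : Finset (Lit Atom)) : Option Bool :=
  if ∃ a ∈ S, f a = some false then some false
  else if ∀ a ∈ S, f a = some true then some true
  else none

/-- The four model conditions (MΔ+), (MΔ-), (M∂+), (M∂-). -/
def ModelConditions {Atom : Type} (T : DTheory Atom)
    (I : DInterp Atom) : Prop :=
  (∀ q : Lit Atom,
    I.del q = some true ↔
      (q ∈ T.facts ∨
       ∃ r ∈ T.rules, r.kind = RuleKind.strict ∧ r.head = q ∧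
         kleeneAll I.del r.body = some true)) ∧
  (∀ q : Lit Atom,
    I.del q = some false ↔
      (q ∉ T.facts ∧
       ∀ r ∈ T.rules, r.kind = RuleKind.strict → r.head = q →
         kleeneAll I.del r.body = some false)) ∧
  (∀ q : Lit Atom,
    I.par q = some true ↔
      (I.del q = some true ∨
       ((∃ r ∈ T.rules, r.isSd ∧ r.head = q ∧ kleeneAll I.par r.body = some true) ∧
        I.del q.compl = some false ∧
        ∀ s ∈ T.rules, s.head = q.compl →
          (kleeneAll I.par s.body = some false ∨
           ∃ t ∈ T.rules, t.isSd ∧ t.head = q ∧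
             kleeneAll I.par t.body = some true ∧ T.sup t s)))) ∧
  (∀ q : Lit Atom,
    I.par q = some false ↔
      (I.del q = some false ∧
       ((∀ r ∈ T.rules, r.isSd → r.head = q → kleeneAll I.par r.body = some false) ∨
        I.del q.compl = some true ∨
        (∃ s ∈ T.rules, s.head = q.compl ∧ kleeneAll I.par s.body = some true ∧
          ∀ t ∈ T.rules, t.isSd → t.head = q →
            (kleeneAll I.par t.body = some false ∨ ¬ T.sup t s)))))

/-- A defeasible model of `T`: a defeasible interpretation (coherent pair of partial
functions) satisfying the four model conditions. -/
def IsModel {Atom : Type} (T : DTheory Atom) (I : DInterp Atom) : Prop :=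
  I.Coherent ∧ ModelConditions T I

/-- A conclusion holds in an interpretation. -/
def DLHolds {Atom : Type} (I : DInterp Atom) : Concl Atom → Prop
  | .plusDelta q => I.del q = some true
  | .minusDelta q => I.del q = some false
  | .plusPartial q => I.par q = some true
  | .minusPartial q => I.par q = some false

/-- Set-based version of `Licensed`. -/
def LicS {Atom : Type} (T : DTheory Atom)
    (S : Concl Atom → Prop) : Concl Atom → Prop
  | .plusDelta q =>
      q ∈ T.facts ∨
      ∃ r ∈ T.rules, r.kind = RuleKind.strict ∧ r.head = q ∧
        ∀ a ∈ r.body, S (Concl.plusDelta a)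
  | .minusDelta q =>
      q ∉ T.facts ∧
      ∀ r ∈ T.rules, r.kind = RuleKind.strict → r.head = q →
        ∃ a ∈ r.body, S (Concl.minusDelta a)
  | .plusPartial q =>
      (S (Concl.plusDelta q)) ∨
      ((∃ r ∈ T.rules, r.isSd ∧ r.head = q ∧
          ∀ a ∈ r.body, S (Concl.plusPartial a)) ∧
       (S (Concl.minusDelta q.compl)) ∧
       ∀ s ∈ T.rules, s.head = q.compl →
         ((∃ a ∈ s.body, S (Concl.minusPartial a)) ∨
          (∃ t ∈ T.rules, t.isSd ∧ t.head = q ∧ T.sup t s ∧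
            ∀ a ∈ t.body, S (Concl.plusPartial a))))
  | .minusPartial q =>
      (S (Concl.minusDelta q)) ∧
      ((∀ r ∈ T.rules, r.isSd → r.head = q →
          ∃ a ∈ r.body, S (Concl.minusPartial a)) ∨
       (S (Concl.plusDelta q.compl)) ∨
       (∃ s ∈ T.rules, s.head = q.compl ∧
          (∀ a ∈ s.body, S (Concl.plusPartial a)) ∧
          ∀ t ∈ T.rules, t.isSd → t.head = q →
            ((∃ a ∈ t.body, S (Concl.minusPartial a)) ∨ ¬ T.sup t s)))

theorem licensed_iff {Atom : Type} (T : DTheory Atom) (P : List (Concl Atom)) (c : Concl Atom) :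
    Licensed T P c ↔ LicS T (fun d => d ∈ P) c := by
  cases c <;> exact Iff.rfl

/-- The underlying literal. -/
def Concl.lit {Atom : Type} : Concl Atom → Lit Atom
  | .plusDelta q => q
  | .minusDelta q => q
  | .plusPartial q => q
  | .minusPartial q => q

theorem LicS.rel_mono {Atom : Type} {T : DTheory Atom} {S S' : Concl Atom → Prop}
    {c : Concl Atom}
    (h1 : ∀ d : Concl Atom, d.lit = c.lit → S d → S' d)
    (h2 : ∀ d : Concl Atom, d.lit = c.lit.compl → S d → S' d)
    (h3 : ∀ r ∈ T.rules, ∀ d : Concl Atom, d.lit ∈ r.body → S d → S' d)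
    (h : LicS T S c) : LicS T S' c := by
  have hall : ∀ (k : Lit Atom → Concl Atom), (∀ a, (k a).lit = a) → ∀ r ∈ T.rules,
      (∀ a ∈ r.body, S (k a)) → ∀ a ∈ r.body, S' (k a) := by
    intro k hk r hr h a ha
    exact h3 r hr _ (by rw [hk]; exact ha) (h a ha)
  have hex : ∀ (k : Lit Atom → Concl Atom), (∀ a, (k a).lit = a) → ∀ r ∈ T.rules,
      (∃ a ∈ r.body, S (k a)) → ∃ a ∈ r.body, S' (k a) := by
    rintro k hk r hr ⟨a, ha, h⟩
    exact ⟨a, ha, h3 r hr _ (by rw [hk]; exact ha) h⟩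
  cases c with
  | plusDelta q =>
    rcases h with h | ⟨r, hr, hk, hh, hb⟩
    · exact Or.inl h
    · exact Or.inr ⟨r, hr, hk, hh, hall .plusDelta (fun _ => rfl) r hr hb⟩
  | minusDelta q =>
    exact ⟨h.1, fun r hr hk hh => hex .minusDelta (fun _ => rfl) r hr (h.2 r hr hk hh)⟩
  | plusPartial q =>
    rcases h with h | ⟨⟨r, hr, hk, hh, hb⟩, hd, hs⟩
    · exact Or.inl (h1 _ rfl h)
    · refine Or.inr ⟨⟨r, hr, hk, hh, hall .plusPartial (fun _ => rfl) r hr hb⟩, h2 _ rfl hd, ?_⟩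
      intro s hsr hsh
      rcases hs s hsr hsh with h | ⟨t, ht, hk, hh, hsup, hb⟩
      · exact Or.inl (hex .minusPartial (fun _ => rfl) s hsr h)
      · exact Or.inr ⟨t, ht, hk, hh, hsup, hall .plusPartial (fun _ => rfl) t ht hb⟩
  | minusPartial q =>
    refine ⟨h1 _ rfl h.1, ?_⟩
    rcases h.2 with h | h | ⟨s, hs, hh, hb, ht⟩
    · exact Or.inl fun r hr hk hh => hex .minusPartial (fun _ => rfl) r hr (h r hr hk hh)
    · exact Or.inr (Or.inl (h2 _ rfl h))
    · refine Or.inr (Or.inr ⟨s, hs, hh, hall .plusPartial (fun _ => rfl) s hs hb, ?_⟩)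
      intro t htr hk hh
      exact (ht t htr hk hh).imp (hex .minusPartial (fun _ => rfl) t htr) id

theorem LicS.mono {Atom : Type} {T : DTheory Atom} {S S' : Concl Atom → Prop}
    {c : Concl Atom} (h : LicS T S c) (hS : ∀ d, S d → S' d) : LicS T S' c :=
  h.rel_mono (fun d _ => hS d) (fun d _ => hS d) (fun _ _ d _ => hS d)

theorem Licensed.mono {Atom : Type} {T : DTheory Atom} {P P' : List (Concl Atom)}
    {c : Concl Atom} (h : Licensed T P c) (hS : ∀ d ∈ P, d ∈ P') : Licensed T P' c :=
  (licensed_iff _ _ _).2 (((licensed_iff _ _ _).1 h).mono hS)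

theorem der_nil {Atom : Type} (T : DTheory Atom) : DLDerivation T [] := by
  intro i; exact i.elim0

theorem der_snoc {Atom : Type} {T : DTheory Atom} {P : List (Concl Atom)} {c : Concl Atom} :
    DLDerivation T (P ++ [c]) ↔ DLDerivation T P ∧ Licensed T P c := by
  constructor
  · intro h
    constructor
    · intro i
      have := h ⟨i.1, by have := i.2; rw [List.length_append]; omega⟩
      simpa [List.take_append_of_le_length (le_of_lt i.2), List.getElem_append_left i.2] using this
    · have := h ⟨P.length, by simp⟩
      simpa using this
  · rintro ⟨h, hc⟩ ⟨i, hi⟩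
    simp only [List.length_append, List.length_singleton] at hi
    rcases Nat.lt_or_ge i P.length with h1 | h1
    · have := h ⟨i, h1⟩
      simpa [List.take_append_of_le_length (le_of_lt h1), List.getElem_append_left h1] using this
    · obtain rfl : i = P.length := by omega
      simpa using hc

theorem der_append {Atom : Type} {T : DTheory Atom} {P Q : List (Concl Atom)}
    (hP : DLDerivation T P) (hQ : DLDerivation T Q) : DLDerivation T (P ++ Q) := by
  induction Q using List.reverseRecOn with
  | nil => simpa using hP
  | append_singleton Q c ih =>
    rw [der_snoc] at hQ
    rw [← List.append_assoc, der_snoc]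
    exact ⟨ih hQ.1, hQ.2.mono (fun d hd => List.mem_append_right _ hd)⟩

theorem der_mem {Atom : Type} {T : DTheory Atom} {P : List (Concl Atom)}
    (hP : DLDerivation T P) {c : Concl Atom} (hc : c ∈ P) : Licensed T P c := by
  induction P using List.reverseRecOn with
  | nil => simp at hc
  | append_singleton Q d ih =>
    rw [der_snoc] at hP
    have hm : ∀ e ∈ Q, e ∈ Q ++ [d] := fun e he => List.mem_append_left _ he
    rcases List.mem_append.1 hc with h | h
    · exact (ih hP.1 h).mono hm
    · obtain rfl := List.mem_singleton.1 h
      exact hP.2.mono hm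

theorem proves_iff {Atom : Type} {T : DTheory Atom} {c : Concl Atom} :
    DLProves T c ↔ ∃ P, DLDerivation T P ∧ c ∈ P := by
  constructor
  · rintro ⟨P, hP, h⟩
    exact ⟨P, hP, List.mem_of_getLast? h⟩
  · rintro ⟨P, hP, h⟩
    exact ⟨P ++ [c], der_snoc.2 ⟨hP, der_mem hP h⟩, by simp⟩

theorem exists_der {Atom : Type} (T : DTheory Atom) {ι : Type*} (L : ι → Concl Atom)
    (s : Finset ι) : ∃ P, DLDerivation T P ∧ ∀ i ∈ s, DLProves T (L i) → L i ∈ P := by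
  classical
  induction s using Finset.induction_on with
  | empty => exact ⟨[], der_nil T, by simp⟩
  | insert i s _ ih =>
    obtain ⟨P, hP, h⟩ := ih
    by_cases hi : DLProves T (L i)
    · obtain ⟨Q, hQ, hiQ⟩ := proves_iff.1 hi
      refine ⟨P ++ Q, der_append hP hQ, fun j hj hp => ?_⟩
      rcases Finset.mem_insert.1 hj with rfl | hj
      · exact List.mem_append_right _ hiQ
      · exact List.mem_append_left _ (h j hj hp)
    · refine ⟨P, hP, fun j hj hp => ?_⟩
      rcases Finset.mem_insert.1 hj with rfl | hj
      · exact absurd hp hi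
      · exact h j hj hp

theorem exists_der_lits {Atom : Type} (T : DTheory Atom) (X : Finset (Lit Atom)) :
    ∃ P, DLDerivation T P ∧ ∀ d : Concl Atom, d.lit ∈ X → DLProves T d → d ∈ P := by
  obtain ⟨P1, hP1, h1⟩ := exists_der T Concl.plusDelta X
  obtain ⟨P2, hP2, h2⟩ := exists_der T Concl.minusDelta X
  obtain ⟨P3, hP3, h3⟩ := exists_der T Concl.plusPartial X
  obtain ⟨P4, hP4, h4⟩ := exists_der T Concl.minusPartial X
  refine ⟨_, der_append (der_append hP1 hP2) (der_append hP3 hP4), ?_⟩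
  intro d hd hp
  simp only [List.mem_append]
  cases d with
  | plusDelta q => exact Or.inl (Or.inl (h1 _ hd hp))
  | minusDelta q => exact Or.inl (Or.inr (h2 _ hd hp))
  | plusPartial q => exact Or.inr (Or.inl (h3 _ hd hp))
  | minusPartial q => exact Or.inr (Or.inr (h4 _ hd hp))

/-- Provability is a fixed point of the inference operator. -/
theorem proves_fix {Atom : Type} (T : DTheory Atom) (c : Concl Atom) :
    DLProves T c ↔ LicS T (DLProves T) c := by
  classical
  constructor
  · intro h
    obtain ⟨P, hP, hc⟩ := proves_iff.1 h
    exact ((licensed_iff _ _ _).1 (der_mem hP hc)).mono fun d hd => proves_iff.2 ⟨P, hP, hd⟩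
  · intro h
    obtain ⟨P, hP, hX⟩ := exists_der_lits T
      (insert c.lit (insert c.lit.compl (T.rules.biUnion DRule.body)))
    refine ⟨P ++ [c], der_snoc.2 ⟨hP, (licensed_iff _ _ _).2 ?_⟩, by simp⟩
    refine h.rel_mono (fun d hd => hX d (by simp [hd])) (fun d hd => hX d (by simp [hd])) ?_
    intro r hr d hd
    refine hX d ?_
    simp only [Finset.mem_insert, Finset.mem_biUnion]
    exact Or.inr (Or.inr ⟨r, hr, hd⟩)

/-- No literal is tagged both ways. -/
def ConsS {Atom : Type} (S : Concl Atom → Prop) : Prop :=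
  (∀ q, S (.plusDelta q) → S (.minusDelta q) → False) ∧
  (∀ q, S (.plusPartial q) → S (.minusPartial q) → False)

theorem cons_step {Atom : Type} {T : DTheory Atom} {S : Concl Atom → Prop} (h : ConsS S) :
    ConsS (LicS T S) := by
  constructor
  · rintro q (h1 | ⟨r, hr, hk, hh, hb⟩) ⟨h2, h3⟩
    · exact h2 h1
    · obtain ⟨a, ha, hs⟩ := h3 r hr hk hh
      exact h.1 a (hb a ha) hs
  · rintro q (h1 | ⟨⟨r, hr, hk, hh, hb⟩, hd, hs⟩) ⟨h2, h3⟩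
    · exact h.1 q h1 h2
    · rcases h3 with h3 | h3 | ⟨s, hsr, hsh, hsb, ht⟩
      · obtain ⟨a, ha, hs⟩ := h3 r hr hk hh
        exact h.2 a (hb a ha) hs
      · exact h.1 _ h3 hd
      · rcases hs s hsr hsh with ⟨a, ha, hs⟩ | ⟨t, htr, htk, hth, hsup, htb⟩
        · exact h.2 a (hsb a ha) hs
        · rcases ht t htr htk hth with ⟨a, ha, hs⟩ | hn
          · exact h.2 a (htb a ha) hs
          · exact hn hsup

theorem der_cons {Atom : Type} {T : DTheory Atom} {P : List (Concl Atom)}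
    (hP : DLDerivation T P) : ConsS (fun d => d ∈ P) := by
  induction P using List.reverseRecOn with
  | nil => constructor <;> simp
  | append_singleton Q d ih =>
    rw [der_snoc] at hP
    have hm : ∀ c ∈ Q ++ [d], LicS T (fun e => e ∈ Q) c := by
      intro c hc
      rw [← licensed_iff]
      rcases List.mem_append.1 hc with h | h
      · exact der_mem hP.1 h
      · obtain rfl := List.mem_singleton.1 h
        exact hP.2
    have hc := cons_step (T := T) (ih hP.1)
    exact ⟨fun q h1 h2 => hc.1 q (hm _ h1) (hm _ h2), fun q h1 h2 => hc.2 q (hm _ h1) (hm _ h2)⟩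

theorem proves_cons {Atom : Type} (T : DTheory Atom) : ConsS (DLProves T) := by
  have key : ∀ c d, DLProves T c → DLProves T d → ∃ P, DLDerivation T P ∧ c ∈ P ∧ d ∈ P := by
    intro c d hc hd
    obtain ⟨P, hP, hcP⟩ := proves_iff.1 hc
    obtain ⟨Q, hQ, hdQ⟩ := proves_iff.1 hd
    exact ⟨P ++ Q, der_append hP hQ, List.mem_append_left _ hcP, List.mem_append_right _ hdQ⟩
  constructor
  · intro q h1 h2
    obtain ⟨P, hP, a, b⟩ := key _ _ h1 h2
    exact (der_cons hP).1 q a b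
  · intro q h1 h2
    obtain ⟨P, hP, a, b⟩ := key _ _ h1 h2
    exact (der_cons hP).2 q a b

theorem kleene_false {Atom : Type} (f : Lit Atom → Option Bool) (S : Finset (Lit Atom)) :
    kleeneAll f S = some false ↔ ∃ a ∈ S, f a = some false := by
  unfold kleeneAll
  split_ifs <;> simp_all

theorem kleene_true {Atom : Type} (f : Lit Atom → Option Bool) (S : Finset (Lit Atom)) :
    kleeneAll f S = some true ↔ ∀ a ∈ S, f a = some true := by
  unfold kleeneAll
  split_ifs with h1 h2
  · obtain ⟨a, ha, h⟩ := h1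
    simp only [Option.some.injEq, Bool.false_eq_true, false_iff]
    intro h'
    simp [h' a ha] at h
  · simpa using h2
  · simpa using h2

/-- The model conditions say exactly that the interpretation is a fixed point. -/
theorem model_iff {Atom : Type} (T : DTheory Atom) (I : DInterp Atom) :
    ModelConditions T I ↔ ∀ c, DLHolds I c ↔ LicS T (DLHolds I) c := by
  unfold ModelConditions
  simp only [kleene_false, kleene_true]
  constructor
  · rintro ⟨h1, h2, h3, h4⟩ c
    cases c with
    | plusDelta q => exact h1 q
    | minusDelta q => exact h2 q
    | plusPartial q =>
      have := h3 q
      simp only [DLHolds, LicS]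
      rw [this]
      simp only [and_comm]
    | minusPartial q => exact h4 q
  · intro h
    refine ⟨fun q => h (.plusDelta q), fun q => h (.minusDelta q), fun q => ?_,
      fun q => h (.minusPartial q)⟩
    have := h (.plusPartial q)
    simp only [DLHolds, LicS] at this
    rw [this]
    simp only [and_comm]

theorem sound {Atom : Type} {T : DTheory Atom} {I : DInterp Atom} (hI : ModelConditions T I)
    {P : List (Concl Atom)} (hP : DLDerivation T P) : ∀ c ∈ P, DLHolds I c := by
  induction P using List.reverseRecOn with
  | nil => simp
  | append_singleton Q d ih =>
    rw [der_snoc] at hP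
    intro c hc
    rcases List.mem_append.1 hc with h | h
    · exact ih hP.1 c h
    · obtain rfl := List.mem_singleton.1 h
      exact ((model_iff T I).1 hI c).2 (((licensed_iff _ _ _).1 hP.2).mono (ih hP.1))

open Classical in
/-- The interpretation given by provability. -/
noncomputable def canon {Atom : Type} (T : DTheory Atom) : DInterp Atom where
  del q := if DLProves T (.plusDelta q) then some true
    else if DLProves T (.minusDelta q) then some false else none
  par q := if DLProves T (.plusPartial q) then some true
    else if DLProves T (.minusPartial q) then some false else none

theorem canon_holds {Atom : Type} (T : DTheory Atom) : DLHolds (canon T) = DLProves T := by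
  have hc := proves_cons T
  funext c
  apply propext
  cases c with
  | plusDelta q => simp only [DLHolds, canon]; split_ifs <;> simp_all
  | minusDelta q =>
    have := hc.1 q
    simp only [DLHolds, canon]; split_ifs <;> simp_all
  | plusPartial q => simp only [DLHolds, canon]; split_ifs <;> simp_all
  | minusPartial q =>
    have := hc.2 q
    simp only [DLHolds, canon]; split_ifs <;> simp_all

theorem canon_model {Atom : Type} (T : DTheory Atom) : IsModel T (canon T) := by
  have hh := canon_holds T
  refine ⟨⟨fun q h => ?_, fun q h => ?_⟩, ?_⟩
  · have h' : DLHolds (canon T) (.plusDelta q) := h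
    change DLHolds (canon T) (.plusPartial q)
    rw [hh] at h' ⊢
    exact (proves_fix T _).2 (Or.inl h')
  · have h' : DLHolds (canon T) (.minusPartial q) := h
    change DLHolds (canon T) (.minusDelta q)
    rw [hh] at h' ⊢
    exact ((proves_fix T _).1 h').1
  · rw [model_iff, hh]
    exact proves_fix T

/-- Characterization of defeasible provability. -/
theorem DL_plusPartial_char {Atom : Type} [Countable Atom] [DecidableEq Atom]
    (T : DTheory Atom) (hacyc : SupAcyclic T) (q : Lit Atom) :
    DLProves T (Concl.plusPartial q) ↔
      ∀ I : DInterp Atom, IsModel T I → I.par q = some true := by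
  constructor
  · intro h I hI
    obtain ⟨P, hP, hc⟩ := proves_iff.1 h
    exact sound hI.2 hP _ hc
  · intro h
    have h' : DLHolds (canon T) (.plusPartial q) := h _ (canon_model T)
    rwa [canon_holds] at h'
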